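/- Let k ≥ 1 be an integer and ε > 0 a fixed real number. Let F be a sunflower-free k-uniform finite set system such that |⋃_{F∈F} F| ≤ k^{2.5−ε}. Then |F| ≤ 3·(⌈2k/3⌉ + 1)·(2^{1/3}·3e)^k·k^{⌈k(1 − 2ε/3)⌉}. -/

import Mathlib

/-- Three (distinct) sets form a sunflower with 3 petals: each pairwise
intersection equals the common intersection of all three. -/
def IsThreeSunflower {α : Type*} [DecidableEq α] (A B C : Finset α) : Prop :=
  A ∩ B = A ∩ B ∩ C ∧ A ∩ C = A ∩ B ∩ C ∧ B ∩ C = A ∩ B ∩ C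

/-- A family of sets is sunflower-free if no three distinct members form a
sunflower with 3 petals. -/
def SunflowerFree {α : Type*} [DecidableEq α] (F : Finset (Finset α)) : Prop :=
  ¬ ∃ A ∈ F, ∃ B ∈ F, ∃ C ∈ F, A ≠ B ∧ A ≠ C ∧ B ≠ C ∧ IsThreeSunflower A B C

/-!
Colour the ground set uniformly at random with `k` colours. A `k`-set becomes rainbow with
probability `k! / k ^ k ≥ e ^ (-k)`, so some colouring makes at least an `e ^ (-k)` fraction of `F`
rainbow, and it suffices to bound a rainbow sunflower-free family. For rainbow `x`, `y`, `z` the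
integers `1 - #(coinciding pairs among the points of x, y, z of colour j)` multiply to a tensor of
degree `2 k` in the coordinates of the three sets. A factor vanishes when exactly two of the three
points agree. If `x`, `y`, `z` are not all equal, this happens for some colour, because otherwise
they would form a sunflower; so the tensor is diagonal with nonzero diagonal entries and has slice
rank `#F`. On the other hand each of its monomials has degree at most `2 k / 3` in one of the three
sets, so its slice rank is at most three times the number of subsets of the ground set of size at
most `2 k / 3`.
-/

open Finset

section SliceRank

variable {K X I₁ I₂ I₃ : Type*}

lemma exists_mem_finrank_le_card_support [Field K] [Fintype X] [DecidableEq K]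
    (V : Submodule K (X → K)) :
    ∃ h ∈ V, Module.finrank K V ≤ #{x | h x ≠ 0} := by
  classical
  obtain ⟨h, hV, hmax⟩ := exists_maximalFor_of_wellFoundedGT (· ∈ V)
    (fun g : X → K => ({x | g x ≠ 0} : Finset X)) ⟨0, V.zero_mem⟩
  refine ⟨h, hV, ?_⟩
  by_contra! hlt
  set S : Finset X := {x | h x ≠ 0} with hS
  let restrict : V →ₗ[K] (S → K) := LinearMap.funLeft K K ((↑) : S → X) ∘ₗ V.subtype
  obtain ⟨⟨v, hvV⟩, hv, hv0⟩ := Submodule.exists_mem_ne_zero_of_ne_bot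
    (LinearMap.ker_ne_bot_of_finrank_lt (f := restrict) (by simpa using hlt))
  have hvS : ∀ x, h x ≠ 0 → v x = 0 := fun x hx => congrFun hv ⟨x, by simpa [hS] using hx⟩
  obtain ⟨x, hx⟩ : ∃ x, v x ≠ 0 := Function.ne_iff.1 fun hv => hv0 (Subtype.ext hv)
  have hhx : h x = 0 := by_contra fun hne => hx (hvS x hne)
  -- Adding `v` keeps the support of `h` and adds the point `x` to it.
  have hsub : S ⊆ ({y | (h + v) y ≠ 0} : Finset X) := by
    intro y hy
    have hy' : h y ≠ 0 := by simpa [hS] using hy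
    simpa [hvS y hy'] using hy'
  have hxS : x ∈ S := hmax (V.add_mem hV hvV) hsub (by simpa [hhx] using hx)
  exact (mem_filter.1 hxS).2 hhx

variable [Fintype I₁] [Fintype I₂] [Fintype I₃]

/-- The tensors `X → X → X → K` that are sums of slices whose one-variable factors are taken from
the families `f₁`, `f₂`, `f₃` (in the first, second and third variable respectively). Membership
bounds the slice rank by `card I₁ + card I₂ + card I₃`. -/
def sliceSubmodule [CommSemiring K] (f₁ : I₁ → X → K) (f₂ : I₂ → X → K) (f₃ : I₃ → X → K) :
    Submodule K (X → X → X → K) where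
  carrier := {T | ∃ (g₁ : I₁ → X → X → K) (g₂ : I₂ → X → X → K) (g₃ : I₃ → X → X → K), ∀ x y z,
    T x y z = ∑ i, f₁ i x * g₁ i y z + ∑ i, f₂ i y * g₂ i x z + ∑ i, f₃ i z * g₃ i x y}
  zero_mem' := ⟨0, 0, 0, by simp⟩
  add_mem' := by
    rintro T T' ⟨g₁, g₂, g₃, hT⟩ ⟨g₁', g₂', g₃', hT'⟩
    refine ⟨g₁ + g₁', g₂ + g₂', g₃ + g₃', fun x y z => ?_⟩
    simp only [Pi.add_apply, hT, hT', mul_add, sum_add_distrib]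
    ring
  smul_mem' := by
    rintro a T ⟨g₁, g₂, g₃, hT⟩
    refine ⟨a • g₁, a • g₂, a • g₃, fun x y z => ?_⟩
    simp only [Pi.smul_apply, hT, smul_eq_mul, mul_add, mul_sum, mul_left_comm]

lemma slice_fst_mem_sliceSubmodule [CommSemiring K] (f₁ : I₁ → X → K) (f₂ : I₂ → X → K)
    (f₃ : I₃ → X → K) (i : I₁) (g : X → X → K) :
    (fun x y z => f₁ i x * g y z) ∈ sliceSubmodule f₁ f₂ f₃ := by
  classical exact ⟨Pi.single i g, 0, 0, by simp [Pi.single_apply, ite_apply]⟩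

lemma slice_snd_mem_sliceSubmodule [CommSemiring K] (f₁ : I₁ → X → K) (f₂ : I₂ → X → K)
    (f₃ : I₃ → X → K) (i : I₂) (g : X → X → K) :
    (fun x y z => f₂ i y * g x z) ∈ sliceSubmodule f₁ f₂ f₃ := by
  classical exact ⟨0, Pi.single i g, 0, by simp [Pi.single_apply, ite_apply]⟩

lemma slice_thd_mem_sliceSubmodule [CommSemiring K] (f₁ : I₁ → X → K) (f₂ : I₂ → X → K)
    (f₃ : I₃ → X → K) (i : I₃) (g : X → X → K) :
    (fun x y z => f₃ i z * g x y) ∈ sliceSubmodule f₁ f₂ f₃ := by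
  classical exact ⟨0, 0, Pi.single i g, by simp [Pi.single_apply, ite_apply]⟩

lemma exists_orthogonal_card_le_card_support_add [Field K] [Fintype X] [DecidableEq K]
    (f : I₁ → X → K) :
    ∃ h : X → K, (∀ i, ∑ x, f i x * h x = 0) ∧
      Fintype.card X ≤ #{x | h x ≠ 0} + Fintype.card I₁ := by
  let L := (Matrix.of f).mulVecLin
  obtain ⟨h, hker, hcard⟩ := exists_mem_finrank_le_card_support (LinearMap.ker L)
  refine ⟨h, fun i => congrFun hker i, ?_⟩
  have hrank := LinearMap.finrank_range_add_finrank_ker L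
  have hrange := Submodule.finrank_le (LinearMap.range L)
  simp only [Module.finrank_fintype_fun_eq_card] at hrank hrange
  lia

theorem card_le_of_diagonal_mem_sliceSubmodule [Field K] [Fintype X]
    {f₁ : I₁ → X → K} {f₂ : I₂ → X → K} {f₃ : I₃ → X → K} {T : X → X → X → K}
    (hT : T ∈ sliceSubmodule f₁ f₂ f₃) (hoff : ∀ x y z, ¬(x = y ∧ y = z) → T x y z = 0)
    (hdiag : ∀ x, T x x x ≠ 0) :
    Fintype.card X ≤ Fintype.card I₁ + Fintype.card I₂ + Fintype.card I₃ := by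
  classical
  obtain ⟨g₁, g₂, g₃, hT⟩ := hT
  obtain ⟨h, horth, hcard⟩ := exists_orthogonal_card_le_card_support_add f₁
  -- Contracting `T` with `h` in the first variable kills the slices of the first kind.
  have hcontract : Matrix.diagonal (fun y => h y * T y y y) =
      Matrix.fromCols (Matrix.of fun y i => f₂ i y) (Matrix.of fun y i => ∑ x, h x * g₃ i x y) *
      Matrix.fromRows (Matrix.of fun i z => ∑ x, h x * g₂ i x z) (Matrix.of fun i z => f₃ i z) := by
    ext y z
    calc Matrix.diagonal (fun y => h y * T y y y) y z = ∑ x, h x * T x y z := by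
          rw [Fintype.sum_eq_single y fun x hx => by rw [hoff x y z fun h => hx h.1, mul_zero]]
          obtain rfl | hyz := eq_or_ne y z
          · simp
          · simp [hyz, hoff y y z fun hyyz => hyz hyyz.2]
      _ = ∑ i, (∑ x, f₁ i x * h x) * g₁ i y z + ∑ i, f₂ i y * ∑ x, h x * g₂ i x z +
          ∑ i, (∑ x, h x * g₃ i x y) * f₃ i z := by
        simp only [hT, mul_add, sum_add_distrib, mul_sum, sum_mul]
        congr 1
        · congr 1 <;> rw [sum_comm] <;> simp only [mul_left_comm, mul_comm]
        · rw [sum_comm]; simp only [mul_left_comm, mul_comm]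
      _ = _ := by
        simp [horth, Matrix.mul_apply]
  have hrank : #{x | h x ≠ 0} ≤ Fintype.card (I₂ ⊕ I₃) := by
    calc #{x | h x ≠ 0} = (Matrix.diagonal fun y => h y * T y y y).rank := by
          simp [Matrix.rank_diagonal, Fintype.card_subtype, hdiag]
      _ ≤ Fintype.card (I₂ ⊕ I₃) := by
        rw [hcontract]
        exact (Matrix.rank_mul_le_left _ _).trans (Matrix.rank_le_card_width _)
  rw [Fintype.card_sum] at hrank
  lia

end SliceRank

section PolynomialMethod

open MvPolynomial

variable {K α κ ι : Type*}

lemma sum_card_support_le_totalDegree [CommSemiring K] [Fintype α]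
    {p : MvPolynomial (Fin 3 × α) K} {m : Fin 3 × α →₀ ℕ} (hm : m ∈ p.support) :
    ∑ i, #{v | m (i, v) ≠ 0} ≤ p.totalDegree :=
  calc ∑ i, #{v | m (i, v) ≠ 0} ≤ ∑ i, ∑ v, m (i, v) := by
        gcongr with i
        rw [card_filter]
        gcongr with v
        split_ifs <;> lia
    _ = m.sum fun _ e => e := by
        rw [Finsupp.sum_fintype _ _ fun _ => rfl, Fintype.sum_prod_type]
    _ ≤ p.totalDegree := le_totalDegree hm

section Monomials

variable [DecidableEq α]

/-- The characteristic vectors of three sets `x`, `y`, `z`, assembled into one evaluation point: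
the variable `X (i, v)` stands for the membership of `v` in the `i`-th set. -/
def tripleIndicator (K : Type*) [Zero K] [One K] (x y z : Finset α) : Fin 3 × α → K :=
  fun p => if p.2 ∈ ![x, y, z] p.1 then 1 else 0

/-- The indicator of the condition that the set `u x` attached to the point `x` contains `S`. These
are the one-variable functions out of which the slices are built. -/
def supersetIndicator (K : Type*) [Zero K] [One K] (u : ι → Finset α) (S : Finset α) :
    ι → K :=
  fun x => if S ⊆ u x then 1 else 0

variable [CommSemiring K] [Fintype α]

lemma prod_indicator_pow (x : Finset α) (e : α → ℕ) :
    ∏ v, (if v ∈ x then 1 else 0 : K) ^ e v = if ({v | e v ≠ 0} : Finset α) ⊆ x then 1 else 0 := by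
  have hfactor : ∀ v, (if v ∈ x then 1 else 0 : K) ^ e v = if e v ≠ 0 → v ∈ x then 1 else 0 := by
    intro v
    by_cases hv : v ∈ x <;> by_cases he : e v = 0 <;> simp [hv, he]
  simp [hfactor, Fintype.prod_ite_zero, Finset.subset_iff]

lemma prod_tripleIndicator_pow (u : ι → Finset α) (m : Fin 3 × α → ℕ) (x y z : ι) :
    ∏ p, tripleIndicator K (u x) (u y) (u z) p ^ m p =
      supersetIndicator K u {v | m (0, v) ≠ 0} x * supersetIndicator K u {v | m (1, v) ≠ 0} y *
        supersetIndicator K u {v | m (2, v) ≠ 0} z := by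
  simp only [supersetIndicator, ← prod_indicator_pow, Fintype.prod_prod_type, Fin.prod_univ_three]
  rfl

-- A monomial of degree at most `d` has degree at most `d / 3` in one of the three blocks.
lemma eval_tripleIndicator_mem_sliceSubmodule (u : ι → Finset α) {d : ℕ}
    {p : MvPolynomial (Fin 3 × α) K} (hp : p.totalDegree ≤ d) :
    (fun x y z => eval (tripleIndicator K (u x) (u y) (u z)) p) ∈
      sliceSubmodule (fun S : {S : Finset α // 3 * #S ≤ d} => supersetIndicator K u S)
        (fun S : {S : Finset α // 3 * #S ≤ d} => supersetIndicator K u S)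
        (fun S : {S : Finset α // 3 * #S ≤ d} => supersetIndicator K u S) := by
  have hexpand : (fun x y z => eval (tripleIndicator K (u x) (u y) (u z)) p) =
      ∑ m ∈ p.support, coeff m p • fun x y z =>
        supersetIndicator K u {v | m (0, v) ≠ 0} x * supersetIndicator K u {v | m (1, v) ≠ 0} y *
          supersetIndicator K u {v | m (2, v) ≠ 0} z := by
    funext x y z
    simp [eval_eq', prod_tripleIndicator_pow, Finset.sum_apply]
  let f (S : {S : Finset α // 3 * #S ≤ d}) : ι → K := supersetIndicator K u S
  rw [hexpand]
  refine Submodule.sum_mem _ fun m hm => Submodule.smul_mem _ _ ?_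
  have hdeg := (sum_card_support_le_totalDegree hm).trans hp
  rw [Fin.sum_univ_three] at hdeg
  obtain h | h | h : 3 * #{v | m (0, v) ≠ 0} ≤ d ∨ 3 * #{v | m (1, v) ≠ 0} ≤ d ∨
      3 * #{v | m (2, v) ≠ 0} ≤ d := by lia
  · simpa only [mul_assoc] using
    slice_fst_mem_sliceSubmodule f f f ⟨_, h⟩ fun y z =>
      supersetIndicator K u {v | m (1, v) ≠ 0} y * supersetIndicator K u {v | m (2, v) ≠ 0} z
  · simpa only [mul_assoc, mul_left_comm] using
    slice_snd_mem_sliceSubmodule f f f ⟨_, h⟩ fun x z =>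
      supersetIndicator K u {v | m (0, v) ≠ 0} x * supersetIndicator K u {v | m (2, v) ≠ 0} z
  · simpa only [mul_comm] using
    slice_thd_mem_sliceSubmodule f f f ⟨_, h⟩ fun x y =>
      supersetIndicator K u {v | m (0, v) ≠ 0} x * supersetIndicator K u {v | m (1, v) ≠ 0} y

end Monomials

variable [CommRing K] [Fintype α] [DecidableEq κ]

/-- The polynomial attached to the colour class of `j`. If three sets meet the class in exactly one
point each, its value at their `tripleIndicator` is `1` minus the number of coinciding pairs among
these points: `0` if exactly two of them coincide, `-2` if all three do, and `1` otherwise. -/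
noncomputable def colorPolynomial (K : Type*) [CommRing K] (c : α → κ) (j : κ) :
    MvPolynomial (Fin 3 × α) K :=
  1 - ∑ v with c v = j, (X (0, v) * X (1, v) + X (1, v) * X (2, v) + X (0, v) * X (2, v))

lemma totalDegree_colorPolynomial_le (c : α → κ) (j : κ) :
    (colorPolynomial K c j).totalDegree ≤ 2 := by
  have hX (p : Fin 3 × α) : (X p : MvPolynomial (Fin 3 × α) K).totalDegree ≤ 1 := by
    simpa [X] using totalDegree_monomial_le (Finsupp.single p 1) (1 : K)
  have hXX (p q : Fin 3 × α) : (X p * X q : MvPolynomial (Fin 3 × α) K).totalDegree ≤ 2 :=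
    (totalDegree_mul _ _).trans (Nat.add_le_add (hX p) (hX q))
  refine (totalDegree_sub _ _).trans (max_le (by simp) (totalDegree_finsetSum_le fun v _ => ?_))
  exact (totalDegree_add _ _).trans
    (max_le ((totalDegree_add _ _).trans (max_le (hXX _ _) (hXX _ _))) (hXX _ _))

lemma sum_indicator_mul_indicator [DecidableEq α] {c : α → κ} {j : κ} {x y : Finset α} {a b : α}
    (hx : ({v ∈ x | c v = j} : Finset α) = {a}) (hy : ({v ∈ y | c v = j} : Finset α) = {b}) :
    ∑ v with c v = j, (if v ∈ x then 1 else 0 : K) * (if v ∈ y then 1 else 0) =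
      if a = b then 1 else 0 := by
  have hinter : ({v | c v = j ∧ v ∈ x ∧ v ∈ y} : Finset α) = {a} ∩ {b} := by
    rw [← hx, ← hy]
    ext v
    simp only [mem_filter, mem_univ, mem_inter, true_and]
    tauto
  simp only [← ite_and, ite_mul, one_mul, zero_mul, sum_boole, filter_filter, hinter]
  obtain rfl | hab := eq_or_ne a b
  · simp
  · simp [hab]

lemma eval_colorPolynomial [DecidableEq α] {c : α → κ} {j : κ} {x y z : Finset α} {a b d : α}
    (hx : ({v ∈ x | c v = j} : Finset α) = {a}) (hy : ({v ∈ y | c v = j} : Finset α) = {b})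
    (hz : ({v ∈ z | c v = j} : Finset α) = {d}) :
    eval (tripleIndicator K x y z) (colorPolynomial K c j) =
      1 - ((if a = b then 1 else 0) + (if b = d then 1 else 0) + (if a = d then 1 else 0)) := by
  rw [← sum_indicator_mul_indicator hx hy, ← sum_indicator_mul_indicator hy hz,
    ← sum_indicator_mul_indicator hx hz]
  simp only [colorPolynomial, tripleIndicator, map_sub, map_one, map_sum, map_add, map_mul, eval_X,
    sum_add_distrib]
  rfl

end PolynomialMethod

section Coloring

variable {α κ : Type*}

lemma SunflowerFree.mono [DecidableEq α] {F F' : Finset (Finset α)} (hF : SunflowerFree F)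
    (h : F' ⊆ F) : SunflowerFree F' := by
  rintro ⟨A, hA, B, hB, C, hC, hABC⟩
  exact hF ⟨A, h hA, B, h hB, C, h hC, hABC⟩

lemma SunflowerFree.exists_mem_exactly_two [DecidableEq α] {F : Finset (Finset α)}
    (hF : SunflowerFree F) (hanti : IsAntichain (· ⊆ ·) (F : Set (Finset α))) {x y z : Finset α}
    (hx : x ∈ F) (hy : y ∈ F) (hz : z ∈ F) (hne : ¬(x = y ∧ y = z)) :
    ∃ v, (v ∈ x ∧ v ∈ y ∧ v ∉ z) ∨ (v ∈ y ∧ v ∈ z ∧ v ∉ x) ∨ (v ∈ x ∧ v ∈ z ∧ v ∉ y) := by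
  have hdiff : ∀ a ∈ F, ∀ b ∈ F, a ≠ b → ∃ v ∈ a, v ∉ b := fun a ha b hb hab =>
    not_subset.1 (hanti ha hb hab)
  by_cases hxy : x = y
  · obtain ⟨v, hv⟩ := hdiff x hx z hz (by grind)
    grind
  by_cases hyz : y = z
  · obtain ⟨v, hv⟩ := hdiff y hy x hx (by grind)
    grind
  by_cases hxz : x = z
  · obtain ⟨v, hv⟩ := hdiff x hx y hy hxy
    grind
  by_contra! hnone
  refine hF ⟨x, hx, y, hy, z, hz, hxy, hxz, hyz, ?_, ?_, ?_⟩ <;> grind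

lemma exists_filter_eq_singleton_of_bijOn [DecidableEq κ] {c : α → κ} {A : Finset α}
    (hA : Set.BijOn c A Set.univ) (j : κ) : ∃ a, ({v ∈ A | c v = j} : Finset α) = {a} := by
  obtain ⟨a, ha, rfl⟩ := hA.surjOn (Set.mem_univ j)
  refine ⟨a, ?_⟩
  ext v
  simp only [mem_filter, mem_singleton]
  exact ⟨fun ⟨hv, hva⟩ => hA.injOn hv ha hva, by rintro rfl; exact ⟨ha, rfl⟩⟩

lemma card_eq_of_bijOn_univ [Fintype κ] {c : α → κ} {A : Finset α}
    (hA : Set.BijOn c A Set.univ) : #A = Fintype.card κ := by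
  classical
  rw [← card_univ, ← card_image_of_injOn hA.injOn]
  congr 1
  exact coe_injective (by simpa using hA.image_eq)

variable [Fintype κ]

section Fintype

variable [Fintype α]

lemma eval_prod_colorPolynomial_eq_zero {K : Type*} [CommRing K] [DecidableEq α] [DecidableEq κ]
    {c : α → κ} {x y z : Finset α} (hx : Set.BijOn c x Set.univ) (hy : Set.BijOn c y Set.univ)
    (hz : Set.BijOn c z Set.univ) {v : α}
    (hv : (v ∈ x ∧ v ∈ y ∧ v ∉ z) ∨ (v ∈ y ∧ v ∈ z ∧ v ∉ x) ∨ (v ∈ x ∧ v ∈ z ∧ v ∉ y)) :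
    MvPolynomial.eval (tripleIndicator K x y z) (∏ j, colorPolynomial K c j) = 0 := by
  rw [map_prod]
  refine prod_eq_zero (mem_univ (c v)) ?_
  obtain ⟨a, ha⟩ := exists_filter_eq_singleton_of_bijOn hx (c v)
  obtain ⟨b, hb⟩ := exists_filter_eq_singleton_of_bijOn hy (c v)
  obtain ⟨d, hd⟩ := exists_filter_eq_singleton_of_bijOn hz (c v)
  have hva : v ∈ x ↔ v = a := by simpa using Finset.ext_iff.1 ha v
  have hvb : v ∈ y ↔ v = b := by simpa using Finset.ext_iff.1 hb v
  have hvd : v ∈ z ↔ v = d := by simpa using Finset.ext_iff.1 hd v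
  rw [eval_colorPolynomial ha hb hd]
  grind

lemma eval_prod_colorPolynomial_diag_ne_zero {K : Type*} [CommRing K] [IsDomain K]
    [NeZero (2 : K)] [DecidableEq α] [DecidableEq κ] {c : α → κ} {x : Finset α}
    (hx : Set.BijOn c x Set.univ) :
    MvPolynomial.eval (tripleIndicator K x x x) (∏ j, colorPolynomial K c j) ≠ 0 := by
  rw [map_prod]
  refine prod_ne_zero_iff.2 fun j _ => ?_
  obtain ⟨a, ha⟩ := exists_filter_eq_singleton_of_bijOn hx j
  rw [eval_colorPolynomial ha ha ha]
  have hvalue : (1 - (1 + 1 + 1) : K) = -2 := by norm_num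
  simp [hvalue, two_ne_zero]

lemma totalDegree_prod_colorPolynomial_le {K : Type*} [CommRing K] [DecidableEq κ] (c : α → κ) :
    (∏ j, colorPolynomial K c j).totalDegree ≤ 2 * Fintype.card κ :=
  calc (∏ j, colorPolynomial K c j).totalDegree
      ≤ ∑ j, (colorPolynomial K c j).totalDegree := MvPolynomial.totalDegree_finsetProd _ _
    _ ≤ ∑ _j : κ, 2 := by gcongr; exact totalDegree_colorPolynomial_le _ _
    _ = 2 * Fintype.card κ := by simp [mul_comm]

theorem SunflowerFree.card_le_of_bijOn [DecidableEq α] {F : Finset (Finset α)}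
    (hF : SunflowerFree F) {c : α → κ} (hc : ∀ A ∈ F, Set.BijOn c A Set.univ) :
    #F ≤ 3 * #{S : Finset α | 3 * #S ≤ 2 * Fintype.card κ} := by
  classical
  have hsized : (F : Set (Finset α)).Sized (Fintype.card κ) := fun A hA =>
    card_eq_of_bijOn_univ (hc A hA)
  have hcard := card_le_of_diagonal_mem_sliceSubmodule
    (eval_tripleIndicator_mem_sliceSubmodule (K := ℚ) (fun A : F => (A : Finset α))
      (totalDegree_prod_colorPolynomial_le c))
    (fun x y z hne => by
      obtain ⟨v, hv⟩ := hF.exists_mem_exactly_two hsized.isAntichain x.2 y.2 z.2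
        (by simpa only [Subtype.ext_iff] using hne)
      exact eval_prod_colorPolynomial_eq_zero (hc x x.2) (hc y y.2) (hc z z.2) hv)
    (fun x => eval_prod_colorPolynomial_diag_ne_zero (hc x x.2))
  rw [Fintype.card_coe] at hcard
  simp only [Fintype.card_subtype] at hcard
  lia

lemma natCard_injOn (A : Finset α) :
    Nat.card {c : α → κ // Set.InjOn c A} =
      (Fintype.card κ).descFactorial #A * Fintype.card κ ^ (Fintype.card α - #A) := by
  classical
  let e : {c : α → κ // Set.InjOn c A} ≃ (A ↪ κ) × ({v // v ∉ A} → κ) :=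
    ((Equiv.piEquivPiSubtypeProd (· ∈ A) fun _ => κ).subtypeEquiv
      fun c => Set.injOn_iff_injective).trans
      (Equiv.prodSubtypeFstEquivSubtypeProd.trans
        ((Equiv.subtypeInjectiveEquivEmbedding _ _).prodCongr (Equiv.refl _)))
  rw [Nat.card_congr e, Nat.card_eq_fintype_card, Fintype.card_prod, Fintype.card_embedding_eq,
    Fintype.card_fun]
  simp

end Fintype

lemma exists_coloring_injOn [Finite α] [Nonempty κ] {r : ℕ} {F : Finset (Finset α)}
    (hF : (F : Set (Finset α)).Sized r) :
    ∃ c : α → κ, ∃ F' ⊆ F, (∀ A ∈ F', Set.InjOn c A) ∧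
      (Fintype.card κ).descFactorial r * #F ≤ Fintype.card κ ^ r * #F' := by
  classical
  have := Fintype.ofFinite α
  have hcount : ∀ A ∈ F, Fintype.card κ ^ r * #{c : α → κ | Set.InjOn c A} =
      Fintype.card κ ^ Fintype.card α * (Fintype.card κ).descFactorial r := by
    intro A hA
    have hr : #A = r := hF hA
    have hcard := natCard_injOn (κ := κ) A
    rw [Nat.card_eq_fintype_card, Fintype.card_subtype, hr] at hcard
    rw [hcard, mul_left_comm, ← pow_add, Nat.add_sub_cancel' (hr ▸ card_le_univ A), mul_comm]
  obtain ⟨c, -, hc⟩ : ∃ c ∈ (univ : Finset (α → κ)), (Fintype.card κ).descFactorial r * #F ≤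
      Fintype.card κ ^ r * #(F.filter fun A : Finset α => Set.InjOn c A) := by
    refine exists_le_of_sum_le univ_nonempty (le_of_eq ?_)
    calc ∑ _c : α → κ, (Fintype.card κ).descFactorial r * #F
        = ∑ A ∈ F, Fintype.card κ ^ r * #{c : α → κ | Set.InjOn c A} := by
          rw [sum_congr rfl hcount]
          simp only [sum_const, card_univ, Fintype.card_fun, smul_eq_mul]
          ring
      _ = ∑ c : α → κ, Fintype.card κ ^ r * #(F.filter fun A : Finset α => Set.InjOn c A) := by
        simp only [← mul_sum, card_filter]
        rw [sum_comm]
  exact ⟨c, _, filter_subset _ _, fun A hA => (mem_filter.1 hA).2, hc⟩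

open scoped Nat in
theorem SunflowerFree.factorial_mul_card_le [Fintype α] [DecidableEq α] {F : Finset (Finset α)}
    (hF : SunflowerFree F) {k : ℕ} (hk : 0 < k) (hsized : (F : Set (Finset α)).Sized k) :
    k ! * #F ≤ k ^ k * (3 * #{S : Finset α | 3 * #S ≤ 2 * k}) := by
  have : NeZero k := ⟨hk.ne'⟩
  obtain ⟨c, F', hF', hinj, hcard⟩ := exists_coloring_injOn (κ := Fin k) hsized
  have hbij : ∀ A ∈ F', Set.BijOn c A Set.univ := fun A hA =>
    ⟨Set.mapsTo_univ _ _, hinj A hA, by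
      simpa using surjOn_of_injOn_of_card_le (t := univ) c (by simp) (hinj A hA)
        (by simp [hsized (hF' hA)])⟩
  have hrainbow := (hF.mono hF').card_le_of_bijOn hbij
  simp only [Fintype.card_fin, Nat.descFactorial_self] at hcard hrainbow
  exact hcard.trans (Nat.mul_le_mul_left _ hrainbow)

end Coloring

section Estimates

variable {α : Type*}

lemma card_filter_card_le_mul_rpow_le_exp [Fintype α] (s : ℝ) {t : ℝ} (ht0 : 0 < t) (ht1 : t ≤ 1) :
    #{S : Finset α | (#S : ℝ) ≤ s} * t ^ s ≤ Real.exp (t * Fintype.card α) :=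
  calc #{S : Finset α | (#S : ℝ) ≤ s} * t ^ s = ∑ S : Finset α with (#S : ℝ) ≤ s, t ^ s := by simp
    _ ≤ ∑ S : Finset α with (#S : ℝ) ≤ s, t ^ #S := by
      refine sum_le_sum fun S hS => ?_
      rw [← Real.rpow_natCast]
      exact Real.rpow_le_rpow_of_exponent_ge ht0 ht1 (mem_filter.1 hS).2
    _ ≤ ∑ S : Finset α, t ^ #S :=
      sum_le_sum_of_subset_of_nonneg (filter_subset _ _) fun _ _ _ => by positivity
    _ = (t + 1) ^ Fintype.card α := by simpa using Fintype.sum_pow_mul_eq_add_pow α t 1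
    _ ≤ Real.exp t ^ Fintype.card α := by gcongr; exact Real.add_one_le_exp t
    _ = Real.exp (t * Fintype.card α) := by rw [← Real.exp_nat_mul, mul_comm]

lemma card_filter_three_mul_card_le_mul_rpow_le_exp [Fintype α] (k : ℕ) {t : ℝ} (ht0 : 0 < t)
    (ht1 : t ≤ 1) :
    #{S : Finset α | 3 * #S ≤ 2 * k} * t ^ (2 * k / 3 : ℝ) ≤ Real.exp (t * Fintype.card α) := by
  refine le_trans (le_of_eq ?_) (card_filter_card_le_mul_rpow_le_exp (2 * k / 3) ht0 ht1)
  congr! 4 with S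
  rw [le_div_iff₀ (by norm_num)]
  norm_cast
  rw [mul_comm]

open scoped Nat in
lemma pow_self_le_exp_mul_factorial (k : ℕ) : (k : ℝ) ^ k ≤ Real.exp k * k ! := by
  rw [← div_le_iff₀ (by positivity)]
  exact Real.pow_div_factorial_le_exp k k.cast_nonneg k

variable [DecidableEq α] {F : Finset (Finset α)} {k : ℕ}

open scoped Nat in
lemma SunflowerFree.card_le_exp_mul [Fintype α] (hF : SunflowerFree F) (hk : 0 < k)
    (hsized : (F : Set (Finset α)).Sized k) :
    (#F : ℝ) ≤ 3 * Real.exp k * #{S : Finset α | 3 * #S ≤ 2 * k} := by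
  have hcard : (k ! * #F : ℝ) ≤ k ^ k * (3 * #{S : Finset α | 3 * #S ≤ 2 * k}) := by
    exact_mod_cast hF.factorial_mul_card_le hk hsized
  refine le_of_mul_le_mul_left (a := (k ! : ℝ)) ?_ (by positivity)
  calc (k ! * #F : ℝ) ≤ k ^ k * (3 * #{S : Finset α | 3 * #S ≤ 2 * k}) := hcard
    _ ≤ Real.exp k * k ! * (3 * #{S : Finset α | 3 * #S ≤ 2 * k}) := by
      gcongr
      exact pow_self_le_exp_mul_factorial k
    _ = k ! * (3 * Real.exp k * #{S : Finset α | 3 * #S ≤ 2 * k}) := by ring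

lemma SunflowerFree.of_map {β : Type*} [DecidableEq β] {e : β ↪ α} {F' : Finset (Finset β)}
    (hF : SunflowerFree (F'.map (mapEmbedding e).toEmbedding)) : SunflowerFree F' := by
  rintro ⟨A, hA, B, hB, C, hC, hABC⟩
  refine hF ⟨A.map e, mem_map_of_mem _ hA, B.map e, mem_map_of_mem _ hB, C.map e,
    mem_map_of_mem _ hC, ?_⟩
  simpa only [IsThreeSunflower, ne_eq, ← map_inter, map_inj] using hABC

omit [DecidableEq α] in
lemma exists_map_subtype_eq {G : Finset α} (hG : ∀ A ∈ F, A ⊆ G) :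
    ∃ F' : Finset (Finset G),
      F'.map (mapEmbedding (Function.Embedding.subtype (· ∈ G))).toEmbedding = F := by
  classical
  refine ⟨F.image (Finset.subtype (· ∈ G)), ?_⟩
  rw [map_eq_image, image_image]
  refine (image_congr fun A hA => ?_).trans image_id
  exact subtype_map_of_mem (hG A hA)

theorem SunflowerFree.card_mul_rpow_le (hF : SunflowerFree F) (hk : 0 < k)
    (hsized : (F : Set (Finset α)).Sized k) {G : Finset α} (hG : ∀ A ∈ F, A ⊆ G)
    {t : ℝ} (ht0 : 0 < t) (ht1 : t ≤ 1) :
    #F * t ^ (2 * k / 3 : ℝ) ≤ 3 * Real.exp (k + t * #G) := by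
  obtain ⟨F', rfl⟩ := exists_map_subtype_eq hG
  have hsized' : (F' : Set (Finset G)).Sized k := fun A hA => by
    simpa using hsized (mem_map_of_mem _ hA)
  calc #(F'.map _) * t ^ (2 * k / 3 : ℝ)
      ≤ 3 * Real.exp k * #{S : Finset G | 3 * #S ≤ 2 * k} * t ^ (2 * k / 3 : ℝ) := by
        rw [card_map]
        gcongr
        exact hF.of_map.card_le_exp_mul hk hsized'
    _ ≤ 3 * Real.exp k * Real.exp (t * #G) := by
      rw [mul_assoc]
      gcongr
      simpa using card_filter_three_mul_card_le_mul_rpow_le_exp (α := G) k ht0 ht1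
    _ = 3 * Real.exp (k + t * #G) := by rw [mul_assoc, ← Real.exp_add]

-- The choice `t = k ^ (ε - 3 / 2)` makes `t * #G ≤ k`.
theorem SunflowerFree.card_le_of_card_ground_le_rpow (hF : SunflowerFree F) (hk : 0 < k)
    (hsized : (F : Set (Finset α)).Sized k) {G : Finset α} (hG : ∀ A ∈ F, A ⊆ G) {ε : ℝ}
    (hcard : (#G : ℝ) ≤ (k : ℝ) ^ (2.5 - ε)) :
    (#F : ℝ) ≤ 3 * Real.exp (2 * k) * (k : ℝ) ^ (k * (1 - 2 * ε / 3)) := by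
  obtain rfl | ⟨A, hA⟩ := F.eq_empty_or_nonempty
  · simp only [card_empty, Nat.cast_zero]
    positivity
  have hk0 : (0 : ℝ) < k := by exact_mod_cast hk
  set t : ℝ := (k : ℝ) ^ (ε - 1.5) with ht
  have ht0 : 0 < t := by positivity
  have htk : t * (k : ℝ) ^ (2.5 - ε) = k := by
    rw [ht, ← Real.rpow_add hk0]
    norm_num
  have ht1 : t ≤ 1 := by
    have hkG : (k : ℝ) ≤ #G := by exact_mod_cast hsized hA ▸ card_le_card (hG A hA)
    nlinarith
  have htG : t * #G ≤ k := (mul_le_mul_of_nonneg_left hcard ht0.le).trans_eq htk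
  have htpow : t ^ (2 * k / 3 : ℝ) * (k : ℝ) ^ (k * (1 - 2 * ε / 3)) = 1 := by
    rw [ht, ← Real.rpow_mul hk0.le, ← Real.rpow_add hk0]
    ring_nf
    exact Real.rpow_zero _
  calc (#F : ℝ) = #F * t ^ (2 * k / 3 : ℝ) * (k : ℝ) ^ (k * (1 - 2 * ε / 3)) := by
        rw [mul_assoc, htpow, mul_one]
    _ ≤ 3 * Real.exp (k + t * #G) * (k : ℝ) ^ (k * (1 - 2 * ε / 3)) := by
      refine mul_le_mul_of_nonneg_right ?_ (by positivity)
      exact hF.card_mul_rpow_le hk hsized hG ht0 ht1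
    _ ≤ 3 * Real.exp (2 * k) * (k : ℝ) ^ (k * (1 - 2 * ε / 3)) := by
      gcongr
      linarith

end Estimates

theorem sunflowerFree_uniform_small_ground_bound {α : Type*} [DecidableEq α]
    (k : ℕ) (hk : 1 ≤ k) (ε : ℝ) (hε : 0 < ε)
    (F : Finset (Finset α)) (huniform : ∀ A ∈ F, A.card = k)
    (hsf : SunflowerFree F)
    (hground : ((F.sup id).card : ℝ) ≤ (k : ℝ) ^ ((2.5 : ℝ) - ε)) :
    (F.card : ℝ) ≤ 3 * ((⌈(2 * k : ℚ) / 3⌉₊ : ℝ) + 1) *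
      (2 ^ ((1 : ℝ) / 3) * 3 * Real.exp 1) ^ k *
      (k : ℝ) ^ ⌈(k : ℝ) * (1 - 2 * ε / 3)⌉₊ := by
  have hexp : Real.exp (2 * k) ≤ (2 ^ ((1 : ℝ) / 3) * 3 * Real.exp 1) ^ k := by
    have htwo : (1 : ℝ) ≤ 2 ^ ((1 : ℝ) / 3) := Real.one_le_rpow (by norm_num) (by norm_num)
    rw [mul_comm, Real.exp_nat_mul, ← one_add_one_eq_two, Real.exp_add, one_add_one_eq_two]
    gcongr
    linarith [Real.exp_one_lt_three]
  have hpow : (k : ℝ) ^ (k * (1 - 2 * ε / 3)) ≤ (k : ℝ) ^ ⌈(k : ℝ) * (1 - 2 * ε / 3)⌉₊ := by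
    rw [← Real.rpow_natCast]
    exact Real.rpow_le_rpow_of_exponent_le (by exact_mod_cast hk) (Nat.le_ceil _)
  calc (#F : ℝ) ≤ 3 * Real.exp (2 * k) * (k : ℝ) ^ (k * (1 - 2 * ε / 3)) :=
        hsf.card_le_of_card_ground_le_rpow hk (fun A hA => huniform A hA)
          (fun A hA => le_sup (f := id) hA) hground
    _ ≤ 3 * ((⌈(2 * k : ℚ) / 3⌉₊ : ℝ) + 1) * (2 ^ ((1 : ℝ) / 3) * 3 * Real.exp 1) ^ k *
        (k : ℝ) ^ ⌈(k : ℝ) * (1 - 2 * ε / 3)⌉₊ := by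
      gcongr
      linarith [Nat.cast_nonneg (α := ℝ) ⌈(2 * k : ℚ) / 3⌉₊]
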